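/- Let K be an algebraically closed field of characteristic 0 and let f and g be nonconstant, relatively prime polynomials in K[t]. Let A, B ∈ K[t] satisfy either (A, B) = (f² − g², 2fg) or (A, B) = (2fg, f² − g²), and set C = f² + g². Let w ∈ K[t] be a nonzero polynomial. If C is nonconstant of even degree, then (wA)² + (wB)³ ≠ wC. -/

import Mathlib

/-!
Exchanging `f + g` and `f - g` for `f` and `g`, and `w / 2` for `w`, turns the triple
`(2fg, f² - g², f² + g²)` into `(f² - g², 2fg, f² + g²)`, so only the latter has to be treated.
Dividing its equation by `w` gives `w (f² - g²)² + 8 w² f³ g³ = f² + g²`, which is symmetric in `f`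
and `g`; suppose `deg f ≤ deg g`. Comparing degrees yields `deg w + 3 deg f ≤ deg g`, while reducing
modulo `g²` yields `g² ∣ w f² - 1`. If `g` is nonconstant, then `deg (w f²) < deg g²`, hence
`w f² = 1`, so `w` and `f` are constants. What remains of the equation is `g (w (g + 8f)) = 3`,
which forces `g` to be constant as well.
-/

open Polynomial

theorem isCoprime_add_sub {R : Type*} [CommRing R] {a b : R} (h2 : IsUnit (2 : R))
    (hab : IsCoprime a b) : IsCoprime (a + b) (a - b) := by
  obtain ⟨c, hc⟩ := h2.exists_right_inv
  obtain ⟨x, y, hxy⟩ := hab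
  exact ⟨c * (x + y), c * (x - y), by linear_combination 2 * c * hxy + hc⟩

/-- The equation `(wA)² + (wB)³ = wC` for the Pythagorean triple
`(A, B, C) = (r² - s², 2rs, r² + s²)` with parameters `r` and `s`. -/
def IsTripleSolution {R : Type*} [CommRing R] (w r s : R) : Prop :=
  (w * (r ^ 2 - s ^ 2)) ^ 2 + (w * (2 * r * s)) ^ 3 = w * (r ^ 2 + s ^ 2)

namespace IsTripleSolution

section CommRing

variable {R : Type*} [CommRing R] {w r s : R}

theorem symm (h : IsTripleSolution w r s) : IsTripleSolution w s r := by
  unfold IsTripleSolution at h ⊢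
  linear_combination h

theorem add_sub_of_swap
    (h : (2 * w * (2 * r * s)) ^ 2 + (2 * w * (r ^ 2 - s ^ 2)) ^ 3 = 2 * w * (r ^ 2 + s ^ 2)) :
    IsTripleSolution w (r + s) (r - s) := by
  unfold IsTripleSolution
  linear_combination h

theorem cancel_left [IsDomain R] (h : IsTripleSolution w r s) (hw : w ≠ 0) :
    w * (r ^ 2 - s ^ 2) ^ 2 + 8 * (w ^ 2 * r ^ 3 * s ^ 3) = r ^ 2 + s ^ 2 := by
  unfold IsTripleSolution at h
  apply mul_left_cancel₀ hw
  linear_combination h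

theorem sq_dvd_mul_sq_sub_one [IsDomain R] (h : IsTripleSolution w r s) (hw : w ≠ 0)
    (hrs : IsCoprime r s) : s ^ 2 ∣ w * r ^ 2 - 1 := by
  have hdvd : s ^ 2 ∣ r ^ 2 * (w * r ^ 2 - 1) :=
    ⟨1 - w * s ^ 2 + 2 * w * r ^ 2 - 8 * w ^ 2 * r ^ 3 * s,
      by linear_combination h.cancel_left hw⟩
  exact hrs.symm.pow.dvd_of_dvd_mul_left hdvd

theorem mul_mul_add_eq_three [IsDomain R] (h : IsTripleSolution w r s) (hs : s ≠ 0)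
    (hwr : w * r ^ 2 = 1) : s * (w * (s + 8 * r)) = 3 := by
  have hw : w ≠ 0 := left_ne_zero_of_mul_eq_one hwr
  apply mul_left_cancel₀ (pow_ne_zero 2 hs)
  linear_combination h.cancel_left hw + (2 * s ^ 2 - r ^ 2 - 8 * w * r * s ^ 3) * hwr

end CommRing

section Polynomial

variable {R : Type*} [CommRing R] [IsDomain R] {w r s : R[X]}

theorem natDegree_add_three_mul_le (h : IsTripleSolution w r s) (h2 : (2 : R) ≠ 0) (hw : w ≠ 0)
    (hr : r ≠ 0) (hs : s ≠ 0) (hle : r.natDegree ≤ s.natDegree) :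
    w.natDegree + 3 * r.natDegree ≤ s.natDegree := by
  have hcubic : (C (2 ^ 3) * (w ^ 2 * r ^ 3 * s ^ 3)).natDegree =
      2 * w.natDegree + 3 * r.natDegree + 3 * s.natDegree := by
    rw [natDegree_C_mul (pow_ne_zero 3 h2), natDegree_mul (by positivity) (by positivity),
      natDegree_mul (by positivity) (by positivity)]
    simp only [natDegree_pow]
  have hrest : (r ^ 2 + s ^ 2 - w * (r ^ 2 - s ^ 2) ^ 2).natDegree ≤
      w.natDegree + 4 * s.natDegree := by
    have hr2 : (r ^ 2).natDegree ≤ 2 * s.natDegree := by rw [natDegree_pow]; lia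
    have hs2 : (s ^ 2).natDegree ≤ 2 * s.natDegree := natDegree_pow_le
    have hsum := natDegree_add_le_of_degree_le hr2 hs2
    have hsq := natDegree_pow_le_of_le 2 (natDegree_sub_le_of_le hr2 hs2)
    have hprod := natDegree_mul_le_of_le (le_refl w.natDegree) hsq
    exact (natDegree_sub_le_of_le hsum hprod).trans (by lia)
  have heq : C (2 ^ 3) * (w ^ 2 * r ^ 3 * s ^ 3) =
      r ^ 2 + s ^ 2 - w * (r ^ 2 - s ^ 2) ^ 2 := by
    rw [C_pow, C_ofNat]
    linear_combination h.cancel_left hw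
  rw [← heq, hcubic] at hrest
  lia

theorem mul_sq_eq_one (h : IsTripleSolution w r s) (h2 : (2 : R) ≠ 0) (hw : w ≠ 0) (hr : r ≠ 0)
    (hrs : IsCoprime r s) (hle : r.natDegree ≤ s.natDegree) (hs : 0 < s.natDegree) :
    w * r ^ 2 = 1 := by
  have hdeg := h.natDegree_add_three_mul_le h2 hw hr (ne_zero_of_natDegree_gt hs) hle
  have hlt : (w * r ^ 2 - 1).natDegree < (s ^ 2).natDegree := by
    rw [← C_1, natDegree_sub_C, natDegree_mul hw (pow_ne_zero 2 hr), natDegree_pow, natDegree_pow]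
    lia
  exact sub_eq_zero.mp (eq_zero_of_dvd_of_natDegree_lt (h.sq_dvd_mul_sq_sub_one hw hrs) hlt)

theorem natDegree_eq_zero_of_le (h : IsTripleSolution w r s) (h2 : (2 : R) ≠ 0) (hw : w ≠ 0)
    (hrs : IsCoprime r s) (hle : r.natDegree ≤ s.natDegree) : s.natDegree = 0 := by
  by_contra! hs
  have hs_pos : 0 < s.natDegree := Nat.pos_of_ne_zero hs
  have hr : r ≠ 0 := by
    rintro rfl
    exact hs (natDegree_eq_zero_of_isUnit (isCoprime_zero_left.mp hrs))
  have hwr := h.mul_sq_eq_one h2 hw hr hrs hle hs_pos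
  have hr_unit : IsUnit r :=
    (isUnit_pow_iff two_ne_zero).mp (IsUnit.of_mul_eq_one_right w hwr)
  have hlt : (8 * r).natDegree < s.natDegree := by
    calc (8 * r).natDegree ≤ (8 : R[X]).natDegree + r.natDegree := natDegree_mul_le
      _ = 0 := by rw [natDegree_ofNat, natDegree_eq_zero_of_isUnit hr_unit]
      _ < s.natDegree := hs_pos
  have hadd : (s + 8 * r).natDegree = s.natDegree := natDegree_add_eq_left_of_natDegree_lt hlt
  have hadd_ne : s + 8 * r ≠ 0 := ne_zero_of_natDegree_gt (hadd ▸ hs_pos)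
  have hthree := congrArg natDegree (h.mul_mul_add_eq_three (ne_zero_of_natDegree_gt hs_pos) hwr)
  rw [natDegree_mul (ne_zero_of_natDegree_gt hs_pos) (mul_ne_zero hw hadd_ne), natDegree_ofNat]
    at hthree
  lia

theorem natDegree_sq_add_sq_eq_zero (h : IsTripleSolution w r s) (h2 : (2 : R) ≠ 0) (hw : w ≠ 0)
    (hrs : IsCoprime r s) : (r ^ 2 + s ^ 2).natDegree = 0 := by
  have hle := natDegree_add_le (r ^ 2) (s ^ 2)
  rw [natDegree_pow, natDegree_pow] at hle
  rcases le_total r.natDegree s.natDegree with hrs_le | hsr_le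
  · have hs := h.natDegree_eq_zero_of_le h2 hw hrs hrs_le
    lia
  · have hr := h.symm.natDegree_eq_zero_of_le h2 hw hrs.symm hsr_le
    lia

end Polynomial

end IsTripleSolution

theorem jesmanowicz_poly_lem_2_3_1_general {R : Type*} [CommRing R] [IsDomain R]
    (h2 : IsUnit (2 : R)) (f g w A B : R[X]) (hfg : IsCoprime f g) (hw : w ≠ 0)
    (hAB : (A = f ^ 2 - g ^ 2 ∧ B = 2 * f * g) ∨ (A = 2 * f * g ∧ B = f ^ 2 - g ^ 2))
    (hC : 0 < (f ^ 2 + g ^ 2).natDegree) :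
    (w * A) ^ 2 + (w * B) ^ 3 ≠ w * (f ^ 2 + g ^ 2) := by
  intro h
  rcases hAB with ⟨rfl, rfl⟩ | ⟨rfl, rfl⟩
  · have hsol : IsTripleSolution w f g := h
    exact hC.ne' (hsol.natDegree_sq_add_sq_eq_zero h2.ne_zero hw hfg)
  · have h2X : IsUnit (2 : R[X]) := C_ofNat (R := R) 2 ▸ h2.map C
    obtain ⟨v, rfl⟩ : 2 ∣ w := h2X.dvd
    have hdeg := (IsTripleSolution.add_sub_of_swap h).natDegree_sq_add_sq_eq_zero h2.ne_zero
      (right_ne_zero_of_mul hw) (isCoprime_add_sub h2X hfg)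
    have hsum : (f + g) ^ 2 + (f - g) ^ 2 = C 2 * (f ^ 2 + g ^ 2) := by
      rw [C_ofNat]
      ring
    rw [hsum, natDegree_C_mul h2.ne_zero] at hdeg
    exact hC.ne' hdeg

theorem jesmanowicz_poly_lem_2_3_1
    {K : Type*} [Field K] [CharZero K] [IsAlgClosed K]
    (f g w A B : K[X])
    (hf : 0 < f.natDegree) (hg : 0 < g.natDegree)
    (hfg : IsCoprime f g) (hw : w ≠ 0)
    (hAB : (A = f ^ 2 - g ^ 2 ∧ B = 2 * f * g) ∨ (A = 2 * f * g ∧ B = f ^ 2 - g ^ 2))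
    (hC : 0 < (f ^ 2 + g ^ 2).natDegree) (hCeven : Even (f ^ 2 + g ^ 2).natDegree) :
    (w * A) ^ 2 + (w * B) ^ 3 ≠ w * (f ^ 2 + g ^ 2) :=
  jesmanowicz_poly_lem_2_3_1_general (isUnit_iff_ne_zero.mpr two_ne_zero) f g w A B hfg hw hAB hC
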